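/- In the Wilson–Xiang setting, X_{1,c} = {(q+1)/2·ε, (q+1)/2·δ − c (mod 2(q+1))} for some pair (ε,δ) with (ε,δ) ∈ {(1,1), (−1,−1)} if q ≡ 3 (mod 4), and (ε,δ) ∈ {(−1,1), (1,−1)} if q ≡ 1 (mod 4). -/

import Mathlib

/-!
Let `χ` be the quadratic character of `K`, let `σ n = χ (Tr (ω ^ n))` and put `h = (q + 1) / 2`.
Since `ω ^ (q + 1)` is the norm of `ω`, a nonsquare of `K`, we have `σ (n + 2 * h) = -σ n`, and
`σ` vanishes exactly at `n ≡ ±h` modulo `2 * (q + 1)`. As `c` is odd, `σ (h + c)` and `σ (h - c)`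
are signs, and exactly one of `±h` lies in `I₁ ∩ J₂`, namely `σ (h + c) * h`; likewise
`σ (h - c) * h - c` is the only element of `I₂ ∩ J₁`.

The two signs are linked by Cayley–Hamilton: if `Tr θ = 0` then `N y * Tr (θ * y⁻¹) = -Tr (θ * y)`.
For `θ = ω ^ h` and `y = ω ^ c` this gives `-σ (h - c) = χ (-1) * σ (h + c)`, and `χ (-1)` is
determined by `q` modulo `4`.
-/

noncomputable section

def IsPrim (L : Type) [Field L] (ω : L) : Prop :=
  ∀ x : L, x ≠ 0 → ∃ n : ℕ, x = ω ^ n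

/-- nonzero squares of `K` -/
def sqSet (K : Type) [Field K] : Set K := {y | ∃ z : K, z ≠ 0 ∧ y = z ^ 2}

section SignFunction

variable {A : Type*} [AddCommGroup A] {f : A → ℤ} {h c : A}

theorem setOf_eq_zero_and_add_eq_one (hf : Function.Antiperiodic f (h + h))
    (hzero : ∀ i, f i = 0 ↔ i = h ∨ i = -h) (hsign : f (h + c) = 1 ∨ f (h + c) = -1) :
    {i | f i = 0 ∧ f (i + c) = 1} = {f (h + c) • h} := by
  have hneg : f (-h + c) = -f (h + c) := by
    rw [← neg_eq_iff_eq_neg, ← hf]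
    abel_nf
  ext i
  rw [Set.mem_ofPred_eq, hzero, Set.mem_singleton_iff]
  constructor
  · rintro ⟨rfl | rfl, hi⟩
    · rw [hi, one_zsmul]
    · rw [neg_eq_iff_eq_neg.mp (hneg.symm.trans hi), neg_one_zsmul]
  · rintro rfl
    rcases hsign with hs | hs
    · simp [hs]
    · simp [hs, hneg]

theorem setOf_union_setOf_eq_pair (hf : Function.Antiperiodic f (h + h))
    (hzero : ∀ i, f i = 0 ↔ i = h ∨ i = -h) (hadd : f (h + c) = 1 ∨ f (h + c) = -1)
    (hsub : f (h - c) = 1 ∨ f (h - c) = -1) :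
    {i | f i = 0 ∧ f (i + c) = 1} ∪ {i | f i = 1 ∧ f (i + c) = 0} =
      {f (h + c) • h, f (h - c) • h - c} := by
  rw [sub_eq_add_neg h c] at hsub ⊢
  have htranslate (i : A) :
      f i = 1 ∧ f (i + c) = 0 ↔ i + c ∈ {j | f j = 0 ∧ f (j + -c) = 1} := by
    rw [Set.mem_ofPred_eq, add_neg_cancel_right, and_comm]
  simp only [htranslate, setOf_eq_zero_and_add_eq_one hf hzero hadd,
    setOf_eq_zero_and_add_eq_one hf hzero hsub, Set.mem_singleton_iff, ← eq_sub_iff_add_eq]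
  rfl

end SignFunction

section ZModLift

variable {N : ℕ}

theorem periodic_apply_val_intCast [NeZero N] {α : Type*} {f : ℤ → α}
    (hf : Function.Periodic f N) (n : ℤ) : f (n : ZMod N).val = f n := by
  rw [ZMod.val_intCast, Int.emod_def, mul_comm]
  exact hf.sub_int_mul_eq _

theorem antiperiodic_apply_val [NeZero N] {α : Type*} [Neg α] {f : ℤ → α} {a : ℤ}
    (hf : Function.Periodic f N) (ha : Function.Antiperiodic f a) :
    Function.Antiperiodic (fun i : ZMod N ↦ f i.val) (a : ZMod N) := by
  intro i
  obtain ⟨n, rfl⟩ := ZMod.intCast_surjective i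
  simp only [← Int.cast_add, periodic_apply_val_intCast hf, ha n]

theorem intCast_eq_or_eq_neg_iff_modEq {h : ℤ} (hN : (N : ℤ) = 4 * h) (n : ℤ) :
    (n : ZMod N) = h ∨ (n : ZMod N) = -h ↔ n ≡ h [ZMOD 2 * h] := by
  rw [← Int.cast_neg, ZMod.intCast_eq_intCast_iff, ZMod.intCast_eq_intCast_iff, hN,
    Int.modEq_comm, Int.modEq_comm (b := -h), Int.modEq_comm (b := h),
    Int.modEq_iff_dvd, Int.modEq_iff_dvd, Int.modEq_iff_dvd]
  constructor
  · rintro (⟨k, hk⟩ | ⟨k, hk⟩)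
    · exact ⟨2 * k, by linear_combination hk⟩
    · exact ⟨2 * k - 1, by linear_combination hk⟩
  · rintro ⟨k, hk⟩
    obtain ⟨m, rfl⟩ | ⟨m, rfl⟩ := k.even_or_odd
    · exact Or.inl ⟨m, by linear_combination hk⟩
    · exact Or.inr ⟨m + 1, by linear_combination hk⟩

end ZModLift

section QuadraticExtension

theorem sq_eq_trace_smul_sub_norm {R S : Type*} [CommRing R] [Nontrivial R] [CommRing S]
    [Algebra R S] [Algebra.IsQuadraticExtension R S] (x : S) :
    x ^ 2 = Algebra.trace R S x • x - algebraMap R S (Algebra.norm R x) := by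
  let b := Module.finBasisOfFinrankEq R S (Algebra.IsQuadraticExtension.finrank_eq_two R S)
  have hcharpoly := Matrix.aeval_self_charpoly (Algebra.leftMulMatrix b x)
  rw [Matrix.charpoly_fin_two, ← Algebra.trace_eq_matrix_trace, ← Algebra.norm_eq_matrix_det,
    Polynomial.aeval_algHom_apply, map_eq_zero_iff _ (Algebra.leftMulMatrix_injective b)]
    at hcharpoly
  simp only [map_add, map_sub, map_mul, map_pow, Polynomial.aeval_X, Polynomial.aeval_C]
    at hcharpoly
  rw [Algebra.smul_def]
  linear_combination hcharpoly

theorem norm_mul_trace_mul_inv {K L : Type*} [Field K] [Field L] [Algebra K L]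
    [Algebra.IsQuadraticExtension K L] (x : L) {y : L} (hy : y ≠ 0) :
    Algebra.norm K y * Algebra.trace K L (x * y⁻¹) =
      Algebra.trace K L y * Algebra.trace K L x - Algebra.trace K L (x * y) := by
  have hconj : Algebra.norm K y • (x * y⁻¹) = Algebra.trace K L y • x - x * y := by
    have hsq := sq_eq_trace_smul_sub_norm (R := K) y
    rw [Algebra.smul_def] at hsq ⊢
    rw [Algebra.smul_def]
    field_simp
    linear_combination x * hsq
  simpa only [map_sub, map_smul, smul_eq_mul] using congrArg (Algebra.trace K L) hconj

theorem isQuadraticExtension_of_card_eq_sq {K L : Type*} [Field K] [Fintype K] [Field L]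
    [Fintype L] [Algebra K L] (hL : Fintype.card L = Fintype.card K ^ 2) :
    Algebra.IsQuadraticExtension K L where
  finrank_eq_two' :=
    Nat.pow_right_injective Fintype.one_lt_card (Module.card_eq_pow_finrank.symm.trans hL)

variable {K L : Type*} [Field K] [Fintype K] [Field L] [Finite L] [Algebra K L]
  [Algebra.IsQuadraticExtension K L]

theorem algebraMap_trace_eq_add_pow_card (x : L) :
    algebraMap K L (Algebra.trace K L x) = x + x ^ Fintype.card K := by
  simp [FiniteField.algebraMap_trace_eq_sum_pow, Finset.sum_range_succ,
    Algebra.IsQuadraticExtension.finrank_eq_two]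

theorem algebraMap_norm_eq_pow_card_add_one (x : L) :
    algebraMap K L (Algebra.norm K x) = x ^ (Fintype.card K + 1) := by
  simp [FiniteField.algebraMap_norm_eq_prod_pow, Finset.prod_range_succ,
    Algebra.IsQuadraticExtension.finrank_eq_two, pow_succ']

theorem trace_eq_zero_iff_pow_card_sub_one_eq_neg_one {x : L} (hx : x ≠ 0) :
    Algebra.trace K L x = 0 ↔ x ^ (Fintype.card K - 1) = -1 := by
  have hfactor : algebraMap K L (Algebra.trace K L x) = x * (x ^ (Fintype.card K - 1) + 1) := by
    rw [algebraMap_trace_eq_add_pow_card, mul_add, mul_pow_sub_one Fintype.card_ne_zero, mul_one,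
      add_comm]
  rw [← map_eq_zero (algebraMap K L), hfactor, mul_eq_zero_iff_left hx, add_eq_zero_iff_eq_neg]

end QuadraticExtension

namespace IsPrim

variable {L : Type} [Field L] {ω : L}

theorem ne_zero (hω : IsPrim L ω) (hchar : ringChar L ≠ 2) : ω ≠ 0 := by
  rintro rfl
  obtain ⟨n, hn⟩ := hω (-1) (neg_ne_zero.mpr one_ne_zero)
  rcases eq_or_ne n 0 with rfl | hn0
  · exact Ring.neg_one_ne_one_of_char_ne_two hchar (by simpa using hn)
  · exact neg_ne_zero.mpr one_ne_zero (hn.trans (zero_pow hn0))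

theorem isPrimitiveRoot [Fintype L] (hω : IsPrim L ω) (hω0 : ω ≠ 0) :
    IsPrimitiveRoot ω (Fintype.card L - 1) := by
  have hgen (x : Lˣ) : x ∈ Subgroup.zpowers (Units.mk0 ω hω0) := by
    obtain ⟨n, hn⟩ := hω x x.ne_zero
    exact ⟨n, Units.ext (by simp [hn])⟩
  rw [← Nat.card_eq_fintype_card, ← Nat.card_units, ← orderOf_eq_card_of_forall_mem_zpowers hgen,
    ← orderOf_units]
  exact IsPrimitiveRoot.orderOf ω

theorem not_isSquare_norm [Finite L] {K : Type*} [Field K] [Finite K] [Algebra K L]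
    (hω : IsPrim L ω) (hchar : ringChar K ≠ 2) : ¬IsSquare (Algebra.norm K ω) := by
  intro hsquare
  obtain ⟨a, ha⟩ := FiniteField.exists_nonsquare hchar
  obtain ⟨x, rfl⟩ := FiniteField.norm_surjective K L a
  obtain ⟨n, rfl⟩ := hω x (by rintro rfl; simp at ha)
  exact ha (by rw [map_pow]; exact hsquare.pow n)

end IsPrim

theorem trace_zpow_eq_zero_iff_modEq {K L : Type*} [Field K] [Fintype K] [Field L] [Fintype L]
    [Algebra K L] (hL : Fintype.card L = Fintype.card K ^ 2) {ω : L}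
    (hω : IsPrimitiveRoot ω (Fintype.card L - 1)) {h : ℕ} (hh : 2 * h = Fintype.card K + 1)
    (n : ℤ) : Algebra.trace K L (ω ^ n) = 0 ↔ n ≡ h [ZMOD 2 * h] := by
  have := isQuadraticExtension_of_card_eq_sq hL
  have hcard : Fintype.card L - 1 = h * (Fintype.card K - 1) * 2 := by
    rw [hL, ← one_pow 2, Nat.sq_sub_sq, ← hh, one_pow]
    ring
  have hK : 1 < Fintype.card K := Fintype.one_lt_card
  have hL0 : 0 < Fintype.card L - 1 := Nat.sub_pos_of_lt Fintype.one_lt_card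
  have hω0 : ω ≠ 0 := hω.ne_zero hL0.ne'
  have hhalf : ω ^ (h * (Fintype.card K - 1)) = -1 := (hω.pow hL0 hcard).eq_neg_one_of_two_right
  have hcriterion : Algebra.trace K L (ω ^ n) = 0 ↔
      ω ^ ((n - h) * (Fintype.card K - 1 : ℕ)) = 1 := by
    rw [trace_eq_zero_iff_pow_card_sub_one_eq_neg_one (zpow_ne_zero n hω0), ← hhalf, pow_mul,
      ← div_eq_one_iff_eq (pow_ne_zero _ (pow_ne_zero h hω0)), ← div_pow, ← zpow_natCast ω h,
      ← zpow_sub₀ hω0, ← zpow_natCast, ← zpow_mul]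
  have horder : ((Fintype.card L - 1 : ℕ) : ℤ) = 2 * h * (Fintype.card K - 1 : ℕ) := by
    rw [hcard]
    push_cast
    ring
  rw [hcriterion, hω.zpow_eq_one_iff_dvd, horder, mul_dvd_mul_iff_right (by omega),
    Int.modEq_comm, Int.modEq_iff_dvd]

theorem quadraticChar_eq_one_iff_mem_sqSet {K : Type} [Field K] [Fintype K] [DecidableEq K]
    {a : K} : quadraticChar K a = 1 ↔ a ∈ sqSet K := by
  constructor
  · intro ha
    have ha0 : a ≠ 0 := by
      rintro rfl
      simp at ha
    obtain ⟨z, rfl⟩ := (quadraticChar_one_iff_isSquare ha0).mp ha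
    exact ⟨z, left_ne_zero_of_mul ha0, (sq z).symm⟩
  · rintro ⟨z, hz, rfl⟩
    exact quadraticChar_sq_one' hz

open scoped Classical in
/-- The quadratic character of the trace of `ω ^ n`. The sets `I₁` and `I₂` of the
Wilson–Xiang setting consist of the residues at which it is `0` and `1`; integer exponents keep
the index shifts by `±c` free of truncation. -/
def traceSign (K : Type*) {L : Type*} [Field K] [Fintype K] [Field L] [Algebra K L] (ω : L)
    (n : ℤ) : ℤ :=
  quadraticChar K (Algebra.trace K L (ω ^ n))

section TraceSign

theorem traceSign_eq_one_iff {K : Type} [Field K] [Fintype K] {L : Type*} [Field L] [Algebra K L]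
    {ω : L} {n : ℤ} : traceSign K ω n = 1 ↔ Algebra.trace K L (ω ^ n) ∈ sqSet K := by
  classical exact quadraticChar_eq_one_iff_mem_sqSet

variable {K : Type*} [Field K] [Fintype K]

theorem traceSign_eq_zero_iff {L : Type*} [Field L] [Algebra K L] {ω : L} {n : ℤ} :
    traceSign K ω n = 0 ↔ Algebra.trace K L (ω ^ n) = 0 := by
  classical exact quadraticChar_eq_zero_iff

variable {L : Type} [Field L] [Fintype L] [Algebra K L] {ω : L}

theorem traceSign_antiperiodic (hL : Fintype.card L = Fintype.card K ^ 2)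
    (hchar : ringChar K ≠ 2) (hω : IsPrim L ω) :
    Function.Antiperiodic (traceSign K ω) (Fintype.card K + 1 : ℕ) := by
  classical
  have := isQuadraticExtension_of_card_eq_sq hL
  intro n
  have hshift : ω ^ (n + (Fintype.card K + 1 : ℕ)) = Algebra.norm K ω • ω ^ n := by
    rw [zpow_add₀ (hω.ne_zero (Algebra.ringChar_eq K L ▸ hchar)), zpow_natCast, mul_comm,
      ← algebraMap_norm_eq_pow_card_add_one, Algebra.smul_def]
  rw [traceSign, hshift, map_smul, smul_eq_mul, map_mul,
    quadraticChar_neg_one_iff_not_isSquare.mpr (hω.not_isSquare_norm hchar), neg_one_mul, traceSign]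

theorem traceSign_sub_eq (hL : Fintype.card L = Fintype.card K ^ 2)
    (hchar : ringChar K ≠ 2) (hω : IsPrim L ω) {h : ℤ}
    (hh : Algebra.trace K L (ω ^ h) = 0) {c : ℕ} (hc : Odd c) :
    traceSign K ω (h - c) = -(ZMod.χ₄ (Fintype.card K) * traceSign K ω (h + c)) := by
  classical
  have := isQuadraticExtension_of_card_eq_sq hL
  have hω0 : ω ≠ 0 := hω.ne_zero (Algebra.ringChar_eq K L ▸ hchar)
  have htrace : Algebra.norm K ω ^ c * Algebra.trace K L (ω ^ (h - c)) =
      -1 * Algebra.trace K L (ω ^ (h + c)) := by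
    have := norm_mul_trace_mul_inv (K := K) (ω ^ h) (pow_ne_zero c hω0)
    rwa [hh, mul_zero, zero_sub, ← neg_one_mul, map_pow, ← zpow_natCast ω c, ← zpow_neg,
      ← zpow_add₀ hω0, ← zpow_add₀ hω0, ← sub_eq_add_neg] at this
  have hsign := congrArg (quadraticChar K) htrace
  rw [map_mul, map_mul, map_pow,
    quadraticChar_neg_one_iff_not_isSquare.mpr (hω.not_isSquare_norm hchar), hc.neg_one_pow,
    neg_one_mul, quadraticChar_neg_one hchar] at hsign
  exact neg_eq_iff_eq_neg.mp hsign

theorem traceSign_add_odd_eq_one_or_neg_one (hL : Fintype.card L = Fintype.card K ^ 2)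
    (hω : IsPrimitiveRoot ω (Fintype.card L - 1)) {h : ℕ} (hh : 2 * h = Fintype.card K + 1)
    {c : ℤ} (hc : Odd c) : traceSign K ω (h + c) = 1 ∨ traceSign K ω (h + c) = -1 := by
  classical
  refine quadraticChar_dichotomy fun hzero ↦ ?_
  have hdvd := ((trace_zpow_eq_zero_iff_modEq hL hω hh _).mp hzero).symm.dvd
  rw [add_sub_cancel_left] at hdvd
  exact Int.not_even_iff_odd.mpr hc (even_iff_two_dvd.mpr (dvd_of_mul_right_dvd hdvd))

theorem traceSign_eq_zero_iff_intCast_eq_or_eq_neg (hL : Fintype.card L = Fintype.card K ^ 2)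
    (hω : IsPrimitiveRoot ω (Fintype.card L - 1)) {h : ℕ} (hh : 2 * h = Fintype.card K + 1)
    (n : ℤ) :
    traceSign K ω n = 0 ↔
      (n : ZMod (2 * (Fintype.card K + 1))) = h ∨ (n : ZMod (2 * (Fintype.card K + 1))) = -h := by
  have hN : ((2 * (Fintype.card K + 1) : ℕ) : ℤ) = 4 * h := by omega
  rw [traceSign_eq_zero_iff, trace_zpow_eq_zero_iff_modEq hL hω hh,
    ← intCast_eq_or_eq_neg_iff_modEq hN, Int.cast_natCast]

theorem setOf_traceSign_eq_pair (hL : Fintype.card L = Fintype.card K ^ 2)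
    (hchar : ringChar K ≠ 2) (hω : IsPrim L ω) {h : ℕ} (hh : 2 * h = Fintype.card K + 1)
    {c : ℤ} (hc : Odd c) :
    {i : ZMod (2 * (Fintype.card K + 1)) |
        traceSign K ω i.val = 0 ∧ traceSign K ω (i + c).val = 1} ∪
      {i | traceSign K ω i.val = 1 ∧ traceSign K ω (i + c).val = 0} =
      {traceSign K ω (h + c) • (h : ZMod (2 * (Fintype.card K + 1))),
        traceSign K ω (h - c) • (h : ZMod (2 * (Fintype.card K + 1))) - c} := by
  have hroot := hω.isPrimitiveRoot (hω.ne_zero (Algebra.ringChar_eq K L ▸ hchar))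
  have hanti := traceSign_antiperiodic hL hchar hω
  have hper : Function.Periodic (traceSign K ω) (2 * (Fintype.card K + 1) : ℕ) := by
    simpa using hanti.periodic_two_mul
  have hval (n : ℤ) : traceSign K ω (n : ZMod (2 * (Fintype.card K + 1))).val = traceSign K ω n :=
    periodic_apply_val_intCast hper n
  have hadd := hval (h + c)
  have hsub := hval (h - c)
  push_cast at hadd hsub
  rw [← hadd, ← hsub]
  refine setOf_union_setOf_eq_pair (c := (c : ZMod (2 * (Fintype.card K + 1))))
    (f := fun i ↦ traceSign K ω i.val) ?_ ?_ ?_ ?_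
  · simpa [← hh, two_mul] using antiperiodic_apply_val hper hanti
  · intro i
    simpa using traceSign_eq_zero_iff_intCast_eq_or_eq_neg hL hroot hh i.val
  · rw [hadd]
    exact traceSign_add_odd_eq_one_or_neg_one hL hroot hh hc
  · rw [hsub, sub_eq_add_neg]
    exact traceSign_add_odd_eq_one_or_neg_one hL hroot hh hc.neg

end TraceSign

/-- Lemma A.1: the form of `X_{1,c}`. -/
theorem wilson_xiang_X1c_form
    (p s q : ℕ) (hp : p.Prime) (hpodd : p ≠ 2) (hs : 0 < s) (hq : q = p ^ s)
    (K L : Type) [Field K] [Fintype K] [Field L] [Fintype L] [Algebra K L]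
    (hK : Fintype.card K = q) (hL : Fintype.card L = q ^ 2)
    (ω : L) (hω : IsPrim L ω)
    (c : ℕ) (hc : c < 2 * q + 2) (hcodd : Odd c)
    (I₁ I₂ J₁ J₂ : Set (ZMod (2 * (q + 1))))
    (hI₁ : I₁ = {i | Algebra.trace K L (ω ^ i.val) = 0})
    (hI₂ : I₂ = {i | Algebra.trace K L (ω ^ i.val) ∈ sqSet K})
    (hJ₁ : J₁ = {i | i + (c : ZMod (2 * (q + 1))) ∈ I₁})
    (hJ₂ : J₂ = {i | i + (c : ZMod (2 * (q + 1))) ∈ I₂})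
    (X₁c : Set (ZMod (2 * (q + 1))))
    (hX₁c : X₁c = (I₁ ∩ J₂) ∪ (I₂ ∩ J₁)) :
    ∃ ε δ : ℤ,
      X₁c = {(((q + 1) / 2 : ℕ) : ZMod (2 * (q + 1))) * (ε : ZMod (2 * (q + 1))),
        (((q + 1) / 2 : ℕ) : ZMod (2 * (q + 1))) * (δ : ZMod (2 * (q + 1)))
          - (c : ZMod (2 * (q + 1)))} ∧
      (q % 4 = 3 → (ε = 1 ∧ δ = 1) ∨ (ε = -1 ∧ δ = -1)) ∧
      (q % 4 = 1 → (ε = -1 ∧ δ = 1) ∨ (ε = 1 ∧ δ = -1)) := by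
  subst hK
  have hqodd : Odd (Fintype.card K) := hq ▸ (hp.odd_of_ne_two hpodd).pow
  have hchar : ringChar K ≠ 2 := fun hK ↦
    Nat.not_even_iff_odd.mpr hqodd (Nat.even_iff.mpr (FiniteField.even_card_of_char_two hK))
  have hh : 2 * ((Fintype.card K + 1) / 2) = Fintype.card K + 1 :=
    Nat.two_mul_div_two_of_even hqodd.add_one
  generalize (Fintype.card K + 1) / 2 = h at hh ⊢
  have hroot := hω.isPrimitiveRoot (hω.ne_zero (Algebra.ringChar_eq K L ▸ hchar))
  have hε := traceSign_add_odd_eq_one_or_neg_one hL hroot hh (hcodd.natCast : Odd (c : ℤ))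
  have hδ := traceSign_sub_eq hL hchar hω
    ((trace_zpow_eq_zero_iff_modEq hL hroot hh _).mpr rfl) hcodd
  have hpair := setOf_traceSign_eq_pair hL hchar hω hh (hcodd.natCast : Odd (c : ℤ))
  refine ⟨traceSign K ω (h + c), traceSign K ω (h - c), ?_, fun hq3 ↦ ?_, fun hq1 ↦ ?_⟩
  · simp only [traceSign_eq_zero_iff, traceSign_eq_one_iff, zpow_natCast, Int.cast_natCast,
      zsmul_eq_mul, mul_comm (Int.cast _)] at hpair
    rw [hX₁c, hJ₁, hJ₂, hI₁, hI₂]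
    exact hpair
  · rw [ZMod.χ₄_nat_three_mod_four hq3] at hδ
    omega
  · rw [ZMod.χ₄_nat_one_mod_four hq1] at hδ
    omega

end
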